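/- Assume the domain, weight, localization, mollifier and kernel setting below with d ≥ 1, p ∈ (1,∞), and β ∈ ℝ, and assume additionally that λ is continuously differentiable on Ω with |∇λ(x)| ≤ κ₁ for all x ∈ Ω. Set κ := κ₀²κ₁, and for ε ∈ (0, 1/(3κ)) define θ(ε) := (1−κε)/(1+κε) and φ(ε) := (1+κε)^{d+p} / (θ(ε)^{d+p+|β|}·(1−κ₁ε)²). Then for all ε, δ ∈ (0, 1/(3κ)), all r > 0, and every measurable u : Ω → ℝ with ∫_Ω |u(x)|^p γ(x)^{−β} dx < ∞: ∫_{Ω ∩ {x : η(x) < θ(ε)r}} ∫_Ω γ(x)^{−β} ρ(|x−y|/(θ(ε)δη(x))) |K_ε u(x) − K_ε u(y)|^p (θ(ε)δη(x))^{−(d+p)} dy dx ≤ φ(ε) · ∫_{Ω ∩ {x : η(x) < r}} ∫_Ω γ(x)^{−β} ρ(|x−y|/(δη(x))) |u(x) − u(y)|^p (δη(x))^{−(d+p)} dy dx. -/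

import Mathlib

/-!
Substituting `y = x + ελ(x)z` turns the convolution into an average over a fixed probability
measure: `K_ε u(x) = ∫ ψ(|z|) u(Φ_z x) dz` with `Φ_z x = x + ελ(x)z` (`Kconv_eq`); the weighted
`L^p` bound on `u` makes these averages genuine integrals (`integrable_mollM`). Jensen's inequality
(`abs_integral_sub_rpow_le`) bounds `|K_ε u(x) - K_ε u(y)|^p` by the average over `z` of
`|u(Φ_z x) - u(Φ_z y)|^p`.

For `|z| < 1` the displacement `ελ(x)|z|` is small compared with `η(x)`, and, because `Γ ⊆ ∂Ω`
forces `η ≤ dist(·, Γ) ≤ κ₀γ`, also compared with `γ(x)`. So `η` and `γ` change under `Φ_z` by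
factors in `[1-κε, 1+κε]`, while `|Φ_z x - Φ_z y| ≤ (1+κε)|x-y|`. With the monotonicity of `ρ` and
the shrunken horizon `θδ`, the kernel at `(x, y)` is therefore at most
`(1+κε)^{d+p} / θ^{d+p+|β|}` times the kernel at `(Φ_z x, Φ_z y)` (`kernel_le`).

After exchanging the order of integration, the change of variables `x ↦ Φ_z x`, `y ↦ Φ_z y` for
fixed `z` costs `(1-κ₁ε)⁻¹` twice (`lintegral_comp_le`), since `Φ_z` is injective on `Ω` and its
Jacobian is the determinant of a rank-one perturbation of the identity.
-/

open MeasureTheory Metric Set Filter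
open scoped ENNReal NNReal Topology

noncomputable section

/-- Euclidean space `ℝ^d`. -/
abbrev Euc (d : ℕ) : Type := EuclideanSpace ℝ (Fin d)

/-- The constant `C̄_{d,p} = √π Γ((d+p)/2) / (Γ((p+1)/2) Γ(d/2))`. -/
def Cbar (d : ℕ) (p : ℝ) : ℝ :=
  Real.sqrt Real.pi * Real.Gamma (((d : ℝ) + p) / 2) /
    (Real.Gamma ((p + 1) / 2) * Real.Gamma ((d : ℝ) / 2))

/-- The surface measure `σ(𝕊^{d-1}) = 2 π^{d/2} / Γ(d/2)` of the unit sphere in `ℝ^d`. -/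
def sphArea (d : ℕ) : ℝ := 2 * Real.pi ^ ((d : ℝ) / 2) / Real.Gamma ((d : ℝ) / 2)

/-- The normalizing constant `C̄_{d,p} (d+p) / σ(𝕊^{d-1})` of the nonlocal seminorm. -/
def normC (d : ℕ) (p : ℝ) : ℝ := Cbar d p * ((d : ℝ) + p) / sphArea d

/-- The distance `η(x) = dist(x, ∂Ω)` to the boundary of `Ω`. -/
def etaD {d : ℕ} (Ω : Set (Euc d)) (x : Euc d) : ℝ := Metric.infDist x (frontier Ω)

/-- The `p`-th power `[u]_{𝔚^p[δ](Ω;β)}^p` of the weighted nonlocal seminorm. -/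
def nlEnergy (d : ℕ) (Ω : Set (Euc d)) (γ : Euc d → ℝ) (p β δ : ℝ) (u : Euc d → ℝ) : ℝ≥0∞ :=
  ENNReal.ofReal (normC d p) *
    ∫⁻ x in Ω, ∫⁻ y in ball x (δ * etaD Ω x),
      ENNReal.ofReal (γ x ^ (-β) * |u y - u x| ^ p / (δ * etaD Ω x) ^ ((d : ℝ) + p))

/-- The weighted nonlocal seminorm `[u]_{𝔚^p[δ](Ω;β)}`. -/
def semiW (d : ℕ) (Ω : Set (Euc d)) (γ : Euc d → ℝ) (p β δ : ℝ) (u : Euc d → ℝ) : ℝ≥0∞ :=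
  nlEnergy d Ω γ p β δ u ^ (1 / p)


/-- The boundary-localized convolution
`K_δ u(x) := ∫_Ω λ_δ(x)^{-d} ψ(|y-x|/λ_δ(x)) u(y) dy`, where `λ_δ(x) = δ·λ(x)`. -/
def Kconv (d : ℕ) (Ω : Set (Euc d)) (lam : Euc d → ℝ) (ψ : ℝ → ℝ) (δ : ℝ)
    (u : Euc d → ℝ) (x : Euc d) : ℝ :=
  ∫ y in Ω, ψ (‖y - x‖ / (δ * lam x)) / (δ * lam x) ^ d * u y

/-! ### Comparison of weights and kernels at nearby points -/

/-- Passing from `a` to a comparable `b` costs at most the factor `((1+t)/(1-t))^|β|` in the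
weight `a ↦ a^{-β}`, for either sign of `β`. -/
lemma weight_le {a b t β : ℝ} (ha : 0 < a) (ht0 : 0 ≤ t) (ht1 : t < 1)
    (h1 : (1 - t) * a ≤ b) (h2 : b ≤ (1 + t) * a) :
    a ^ (-β) * ((1 - t) / (1 + t)) ^ |β| ≤ b ^ (-β) := by
  have hθ : 0 < (1 - t) / (1 + t) := div_pos (by linarith) (by linarith)
  have hb : 0 < b := lt_of_lt_of_le (mul_pos (by linarith) ha) h1
  rcases le_total 0 β with hβ | hβ
  · have h3 : b ≤ a * ((1 - t) / (1 + t))⁻¹ := by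
      rw [inv_div, mul_div_assoc', le_div_iff₀ (by linarith)]
      nlinarith
    calc a ^ (-β) * ((1 - t) / (1 + t)) ^ |β| = (a * ((1 - t) / (1 + t))⁻¹) ^ (-β) := by
          rw [Real.mul_rpow ha.le (inv_nonneg.2 hθ.le), Real.inv_rpow hθ.le,
            Real.rpow_neg hθ.le, inv_inv, abs_of_nonneg hβ]
      _ ≤ b ^ (-β) := Real.rpow_le_rpow_of_nonpos hb h3 (by linarith)
  · have h3 : a * ((1 - t) / (1 + t)) ≤ b := by
      refine le_trans ?_ h1
      rw [mul_comm]
      exact mul_le_mul_of_nonneg_right (div_le_self (by linarith) (by linarith)) ha.le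
    rw [abs_of_nonpos hβ, ← Real.mul_rpow ha.le hθ.le]
    exact Real.rpow_le_rpow (by positivity) h3 (by linarith)

/-- Comparison of the kernel at a pair of points at distance `D` with the kernel at the displaced
pair. Here `a`, `e` stand for `γ`, `η` at the first point of the pair, primes mark the displaced
pair, and `q = d + p`. Shrinking the horizon by `θ = (1-t)/(1+t)` compensates exactly for
`D' ≤ (1+t)D` and `(1-t)e ≤ e'` in the monotone profile `ρ`. -/
lemma kernel_le {a a' e e' D D' t β q δ : ℝ} {ρ : ℝ → ℝ} (hρnn : ∀ x, 0 ≤ ρ x)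
    (hρmono : AntitoneOn ρ (Set.Ici 0)) (hq : 0 ≤ q) (hδ : 0 < δ)
    (ht0 : 0 ≤ t) (ht1 : t < 1) (ha : 0 < a) (he : 0 < e)
    (ha1 : (1 - t) * a ≤ a') (ha2 : a' ≤ (1 + t) * a)
    (he1 : (1 - t) * e ≤ e') (he2 : e' ≤ (1 + t) * e)
    (hD0 : 0 ≤ D') (hD : D' ≤ (1 + t) * D) :
    a ^ (-β) * ρ (D / ((1 - t) / (1 + t) * δ * e)) / ((1 - t) / (1 + t) * δ * e) ^ q ≤
      (1 + t) ^ q / ((1 - t) / (1 + t)) ^ (q + |β|) *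
        (a' ^ (-β) * ρ (D' / (δ * e')) / (δ * e') ^ q) := by
  have hw := weight_le (β := β) ha ht0 ht1 ha1 ha2
  have h1t : 0 < 1 - t := by linarith
  have h1t' : 0 < 1 + t := by linarith
  have ha' : 0 < a' := lt_of_lt_of_le (by positivity) ha1
  have he' : 0 < e' := lt_of_lt_of_le (by positivity) he1
  have hDD : 0 ≤ D := by
    by_contra h
    nlinarith
  have hρ : ρ (D / ((1 - t) / (1 + t) * δ * e)) ≤ ρ (D' / (δ * e')) := by
    refine hρmono (by simp only [Set.mem_Ici]; positivity) (by simp only [Set.mem_Ici]; positivity) ?_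
    calc D' / (δ * e') ≤ ((1 + t) * D) / (δ * ((1 - t) * e)) := by gcongr
      _ = D / ((1 - t) / (1 + t) * δ * e) := by field_simp
  have hpow : (δ * e') ^ q * ((1 - t) / (1 + t)) ^ q ≤
      (1 + t) ^ q * ((1 - t) / (1 + t) * δ * e) ^ q := by
    rw [← Real.mul_rpow (by positivity) (by positivity),
      ← Real.mul_rpow (by positivity) (by positivity)]
    refine Real.rpow_le_rpow (by positivity) ?_ hq
    calc δ * e' * ((1 - t) / (1 + t)) ≤ δ * ((1 + t) * e) * ((1 - t) / (1 + t)) := by gcongr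
      _ = _ := by ring
  have hθ : 0 < (1 - t) / (1 + t) := by positivity
  generalize hθd : (1 - t) / (1 + t) = θ at *
  rw [Real.rpow_add hθ]
  have hX : a ^ (-β) ≤ a' ^ (-β) / θ ^ |β| := by
    rw [le_div_iff₀ (by positivity)]; exact hw
  have hY : 1 / (θ * δ * e) ^ q ≤ (1 + t) ^ q / ((δ * e') ^ q * θ ^ q) := by
    rw [div_le_div_iff₀ (by positivity) (by positivity), one_mul]
    exact hpow
  calc a ^ (-β) * ρ (D / (θ * δ * e)) / (θ * δ * e) ^ q
      = a ^ (-β) * ρ (D / (θ * δ * e)) * (1 / (θ * δ * e) ^ q) := by ring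
    _ ≤ (a' ^ (-β) / θ ^ |β|) * ρ (D' / (δ * e')) * ((1 + t) ^ q / ((δ * e') ^ q * θ ^ q)) := by
        have := hρnn (D / (θ * δ * e))
        have := hρnn (D' / (δ * e'))
        gcongr
    _ = _ := by field_simp

/-! ### Geometry of the domain -/

lemma ball_subset_of_infDist_frontier {d : ℕ} {Ω : Set (Euc d)} (hΩ : IsOpen Ω) {x : Euc d}
    (hx : x ∈ Ω) : ball x (etaD Ω x) ⊆ Ω := by
  rcases le_or_gt (etaD Ω x) 0 with h0 | h0
  · simp [ball_eq_empty.2 h0]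
  refine (convex_ball x _).isPreconnected.subset_of_closure_inter_subset hΩ
    ⟨x, mem_ball_self h0, hx⟩ ?_
  rintro y ⟨hy, hyb⟩
  by_contra hyΩ
  have hyf : y ∈ frontier Ω := by
    rw [hΩ.frontier_eq]; exact ⟨hy, hyΩ⟩
  have := infDist_le_dist_of_mem (x := x) hyf
  rw [mem_ball, dist_comm] at hyb
  exact absurd hyb (not_lt.2 this)

/-- Since `d ≥ 1`, removing a finite set does not shrink the closure of an open set, so the removed
points become boundary points. -/
lemma finite_subset_frontier {d : ℕ} (hd : 1 ≤ d) {Ωs Γ : Set (Euc d)} (hΩ : IsOpen Ωs)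
    (hΓ : Γ.Finite) (hsub : Γ ⊆ closure Ωs) : Γ ⊆ frontier (Ωs \ Γ) := by
  have : Nonempty (Fin d) := ⟨⟨0, hd⟩⟩
  have hdense : Dense (Γᶜ) := by
    have := (dense_univ (X := Euc d)).sdiff_finite hΓ
    rwa [← compl_eq_univ_sdiff] at this
  have hopen : IsOpen (Ωs \ Γ) := hΩ.sdiff hΓ.isClosed
  intro g hg
  rw [hopen.frontier_eq]
  refine ⟨?_, fun h => h.2 hg⟩
  exact closure_minimal (hdense.open_subset_closure_inter hΩ) isClosed_closure (hsub hg)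

/-! ### Jensen's inequality and the change of variables -/

/-- Jensen's inequality for `|·|^p` and a probability measure. -/
lemma abs_integral_sub_rpow_le {E : Type*} [MeasurableSpace E] {μ : Measure E}
    [IsProbabilityMeasure μ] {p : ℝ} (hp : 1 < p) {f g : E → ℝ} (hf : Integrable f μ)
    (hg : Integrable g μ) :
    ENNReal.ofReal (|∫ z, f z ∂μ - ∫ z, g z ∂μ| ^ p) ≤
      ∫⁻ z, ENNReal.ofReal (|f z - g z| ^ p) ∂μ := by
  rw [← integral_sub hf hg]
  have h1 := eLpNorm'_le_eLpNorm'_of_exponent_le one_pos hp.le μ (hf.sub hg).aestronglyMeasurable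
  simp only [eLpNorm', ENNReal.rpow_one, one_div, inv_one, Pi.sub_apply] at h1
  have h2 : ‖∫ z, (f z - g z) ∂μ‖ₑ ≤ (∫⁻ z, ‖f z - g z‖ₑ ^ p ∂μ) ^ p⁻¹ :=
    (enorm_integral_le_lintegral_enorm _).trans h1
  have hp0 : 0 < p := by linarith
  have key : ∀ r : ℝ, ENNReal.ofReal (|r| ^ p) = ‖r‖ₑ ^ p := fun r => by
    rw [← Real.norm_eq_abs, ← ENNReal.ofReal_rpow_of_nonneg (norm_nonneg _) hp0.le,
      ofReal_norm]
  simp only [key]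
  calc _ ≤ ((∫⁻ z, ‖f z - g z‖ₑ ^ p ∂μ) ^ p⁻¹) ^ p := ENNReal.rpow_le_rpow h2 hp0.le
    _ = _ := by rw [← ENNReal.rpow_mul, inv_mul_cancel₀ hp0.ne', ENNReal.rpow_one]

/-- Change of variables under `Φ(x) = x + ελ(x)z` with `|z| ≤ 1`. This map is injective because
`ελ` is a contraction, and its Jacobian determinant `1 + ε ∇λ(x)·z` is at least `1 - κ₁ε`. -/
lemma lintegral_comp_le {d : ℕ} {Ω A B : Set (Euc d)} {lam : Euc d → ℝ}
    {L : Euc d → (Euc d →L[ℝ] ℝ)} {ε κ₁ : ℝ} {z : Euc d} (hε : 0 ≤ ε) (hκε : κ₁ * ε < 1)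
    (hz : ‖z‖ ≤ 1) (hL : ∀ x ∈ Ω, HasFDerivAt lam (L x) x) (hLn : ∀ x ∈ Ω, ‖L x‖ ≤ κ₁)
    (hlip : ∀ x ∈ Ω, ∀ y ∈ Ω, |lam x - lam y| ≤ κ₁ * ‖x - y‖) (hA : MeasurableSet A)
    (hAΩ : A ⊆ Ω) (hAB : MapsTo (fun x => x + (ε * lam x) • z) A B) (F : Euc d → ℝ≥0∞) :
    ∫⁻ x in A, F (x + (ε * lam x) • z) ≤
      ENNReal.ofReal ((1 - κ₁ * ε)⁻¹) * ∫⁻ x in B, F x := by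
  set Φ : Euc d → Euc d := fun x => x + (ε * lam x) • z with hΦ
  set Φ' : Euc d → (Euc d →L[ℝ] Euc d) := fun x =>
    ContinuousLinearMap.id ℝ (Euc d) + (ε • L x).smulRight z with hΦ'
  have hder : ∀ x ∈ A, HasFDerivWithinAt Φ (Φ' x) A x := fun x hx =>
    ((hasFDerivAt_id x).add (((hL x (hAΩ hx)).const_mul ε).smul_const z)).hasFDerivWithinAt
  have hinj : InjOn Φ A := by
    intro x hx y hy hxy
    by_contra hne
    have h0 : 0 < ‖x - y‖ := norm_pos_iff.2 (sub_ne_zero.2 hne)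
    have h1 : x - y = (ε * (lam y - lam x)) • z := by
      have : x + (ε * lam x) • z = y + (ε * lam y) • z := hxy
      rw [mul_sub, sub_smul, sub_eq_sub_iff_add_eq_add, this, add_comm]
    have h2 : ‖x - y‖ ≤ ε * (κ₁ * ‖x - y‖) := by
      calc ‖x - y‖ = ε * |lam y - lam x| * ‖z‖ := by
            conv_lhs => rw [h1]
            rw [norm_smul, Real.norm_eq_abs, abs_mul, abs_of_nonneg hε]
        _ ≤ ε * |lam y - lam x| * 1 := by gcongr
        _ ≤ ε * (κ₁ * ‖x - y‖) := by
            rw [mul_one, abs_sub_comm]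
            gcongr
            exact hlip x (hAΩ hx) y (hAΩ hy)
    nlinarith
  have hdet : ∀ x ∈ A, 1 - κ₁ * ε ≤ |(Φ' x).det| := by
    intro x hx
    have h1 : (Φ' x).det = 1 + ε * L x z :=
      LinearMap.transvection.det ((ε • L x : Euc d →L[ℝ] ℝ) : Euc d →ₗ[ℝ] ℝ) z
    have h2 : |L x z| ≤ κ₁ := by
      have := (L x).le_opNorm z
      have h3 := hLn x (hAΩ hx)
      have := norm_nonneg (L x)
      rw [Real.norm_eq_abs] at *
      nlinarith [norm_nonneg z]
    rw [h1]
    refine le_trans ?_ (le_abs_self _)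
    nlinarith [neg_abs_le (L x z)]
  have hc : 0 < 1 - κ₁ * ε := by linarith
  have hmain : ENNReal.ofReal (1 - κ₁ * ε) * ∫⁻ x in A, F (Φ x) ≤ ∫⁻ x in B, F x := by
    calc _ = ∫⁻ x in A, ENNReal.ofReal (1 - κ₁ * ε) * F (Φ x) :=
          (lintegral_const_mul' _ _ ENNReal.ofReal_ne_top).symm
      _ ≤ ∫⁻ x in A, ENNReal.ofReal |(Φ' x).det| * F (Φ x) := by
          refine setLIntegral_mono' hA fun x hx => ?_
          gcongr
          exact hdet x hx
      _ = ∫⁻ x in Φ '' A, F x :=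
          (lintegral_image_eq_lintegral_abs_det_fderiv_mul volume hA hder hinj F).symm
      _ ≤ _ := lintegral_mono_set hAB.image_subset
  rw [ENNReal.ofReal_inv_of_pos hc, mul_comm, ← div_eq_mul_inv,
    ENNReal.le_div_iff_mul_le (Or.inl (by simpa using hc)) (Or.inl ENNReal.ofReal_ne_top), mul_comm]
  exact hmain

/-! ### The convolution as an average over a probability measure -/

/-- The measure on `ℝ^d` with density `ψ(|z|)`. -/
def mollM (d : ℕ) (ψ : ℝ → ℝ) : Measure (Euc d) :=
  volume.withDensity fun z => ENNReal.ofReal (ψ ‖z‖)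

lemma isProbabilityMeasure_mollM {d : ℕ} {ψ : ℝ → ℝ} (hψnn : ∀ x, 0 ≤ ψ x)
    (hψnorm : ∫ x : Euc d, ψ ‖x‖ = 1) : IsProbabilityMeasure (mollM d ψ) := by
  constructor
  rw [mollM, withDensity_apply _ MeasurableSet.univ, setLIntegral_univ,
    ← ofReal_integral_eq_lintegral_ofReal, hψnorm, ENNReal.ofReal_one]
  · by_contra h
    rw [integral_undef h] at hψnorm
    exact zero_ne_one hψnorm
  · exact ae_of_all _ fun x => hψnn _

lemma ae_norm_lt_one_mollM {d : ℕ} {ψ : ℝ → ℝ} (hψmeas : Measurable ψ)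
    (hψsupp : ∀ x : ℝ, 1 ≤ |x| → ψ x = 0) : ∀ᵐ z ∂(mollM d ψ), ‖z‖ < 1 := by
  rw [mollM, ae_withDensity_iff (by fun_prop)]
  refine ae_of_all _ fun z hz => ?_
  by_contra h
  apply hz
  rw [hψsupp _ (by rw [abs_norm]; exact not_lt.1 h), ENNReal.ofReal_zero]

/-- Substituting `y = x + ελ(x)z` gives `K_ε u(x) = ∫ ψ(|z|) u(x + ελ(x)z) dz`; the support of `ψ`
makes the restriction to `Ω` immaterial. -/
lemma Kconv_eq {d : ℕ} {Ω : Set (Euc d)} {lam : Euc d → ℝ} {ψ : ℝ → ℝ} {ε : ℝ} {u : Euc d → ℝ}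
    {x : Euc d} (hψnn : ∀ x, 0 ≤ ψ x) (hψmeas : Measurable ψ)
    (hψsupp : ∀ x : ℝ, 1 ≤ |x| → ψ x = 0)
    (hs : 0 < ε * lam x) (hball : ball x (ε * lam x) ⊆ Ω) :
    Kconv d Ω lam ψ ε u x = ∫ z, u (x + (ε * lam x) • z) ∂(mollM d ψ) := by
  unfold Kconv mollM
  generalize ε * lam x = s at *
  rw [setIntegral_eq_integral_of_forall_compl_eq_zero]
  · have h1 := Measure.integral_comp_smul (volume : Measure (Euc d))
      (fun w => ψ (‖w‖ / s) / s ^ d * u (x + w)) s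
    have h2 := integral_add_left_eq_self (μ := (volume : Measure (Euc d)))
      (fun y => ψ (‖y - x‖ / s) / s ^ d * u y) x
    simp only [add_sub_cancel_left] at h2
    have hsd : 0 < s ^ d := by positivity
    rw [h2, finrank_euclideanSpace_fin, abs_of_pos (by positivity), smul_eq_mul] at h1
    have h3 := integral_withDensity_eq_integral_smul (μ := (volume : Measure (Euc d)))
      (f := fun z => (ψ ‖z‖).toNNReal) (by fun_prop) (fun z => u (x + s • z))
    change ∫ z, u (x + s • z) ∂(volume.withDensity fun z => ENNReal.ofReal (ψ ‖z‖)) = _ at h3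
    rw [h3]
    rw [inv_mul_eq_div, eq_div_iff hsd.ne'] at h1
    rw [← h1, ← integral_mul_const]
    congr 1
    ext z
    rw [norm_smul, Real.norm_eq_abs, abs_of_pos hs, mul_div_cancel_left₀ _ hs.ne', NNReal.smul_def,
      Real.coe_toNNReal _ (hψnn _), smul_eq_mul]
    field_simp
  · intro y hy
    have hy' : s ≤ ‖y - x‖ := by
      by_contra h
      exact hy (hball (by rw [mem_ball, dist_eq_norm]; exact not_le.1 h))
    rw [hψsupp]
    · simp
    · rw [abs_of_nonneg (by positivity), le_div_iff₀ hs]; linarith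

lemma integrable_mollM {d : ℕ} {ψ : ℝ → ℝ} {u : Euc d → ℝ} {x : Euc d} {s : ℝ}
    (hψnn : ∀ x, 0 ≤ ψ x) (hψmeas : Measurable ψ)
    (hψbdd : ∃ M : ℝ, ∀ x, ψ x ≤ M)
    (hψsupp : ∀ x : ℝ, 1 ≤ |x| → ψ x = 0)
    (hs : 0 < s) (hu : IntegrableOn u (ball x s)) :
    Integrable (fun z => u (x + s • z)) (mollM d ψ) := by
  obtain ⟨M, hM⟩ := hψbdd
  have h0 : Integrable (fun y => ψ (‖y - x‖ / s) * u y) := by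
    have h1 : IntegrableOn (fun y => ψ (‖y - x‖ / s) * u y) (ball x s) := by
      refine Integrable.bdd_mul (c := M) hu
        (Measurable.aestronglyMeasurable (by fun_prop)) (ae_of_all _ fun y => ?_)
      rw [Real.norm_eq_abs, abs_of_nonneg (hψnn _)]
      exact hM _
    rw [← integrableOn_univ]
    refine h1.of_forall_sdiff_eq_zero MeasurableSet.univ ?_
    rintro y ⟨-, hy⟩
    rw [mem_ball, dist_eq_norm, not_lt] at hy
    rw [hψsupp, zero_mul]
    rw [abs_of_nonneg (by positivity), le_div_iff₀ hs]; linarith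
  have h1 : Integrable (fun w => ψ (‖w‖ / s) * u (x + w)) := by
    simpa using h0.comp_add_left x
  have h2 := h1.comp_smul hs.ne'
  have h3 := (integrable_withDensity_iff_integrable_coe_smul (μ := (volume : Measure (Euc d)))
    (f := fun z => (ψ ‖z‖).toNNReal) (by fun_prop) (g := fun z => u (x + s • z))).2
  refine h3 (h2.congr (ae_of_all _ fun z => ?_))
  simp only [norm_smul, Real.norm_eq_abs, abs_of_pos hs, mul_div_cancel_left₀ _ hs.ne',
      Real.coe_toNNReal _ (hψnn _), smul_eq_mul]

/-- A function with finite weighted `L^p` norm is integrable on sets of finite measure on which the weight is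
bounded below. -/
lemma integrableOn_of_weighted {d : ℕ} {Ω S : Set (Euc d)} {γ u : Euc d → ℝ} {p β c : ℝ}
    (hp : 1 < p) (hu : Measurable u) (hS : MeasurableSet S) (hfin : volume S < ⊤)
    (hSΩ : S ⊆ Ω) (hc : 0 < c) (hγ : ∀ y ∈ S, c ≤ γ y ^ (-β))
    (huLp : (∫⁻ x in Ω, ENNReal.ofReal (|u x| ^ p * γ x ^ (-β))) < ⊤) : IntegrableOn u S := by
  have hp0 : 0 < p := by linarith
  have : IsFiniteMeasure (volume.restrict S) := ⟨by simpa using hfin⟩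
  have key : ∀ r : ℝ, ENNReal.ofReal (|r| ^ p) = ‖r‖ₑ ^ p := fun r => by
    rw [← Real.norm_eq_abs, ← ENNReal.ofReal_rpow_of_nonneg (norm_nonneg _) hp0.le,
      ofReal_norm]
  have h1 : ENNReal.ofReal c * ∫⁻ x in S, ‖u x‖ₑ ^ p < ⊤ := by
    refine lt_of_le_of_lt ?_ huLp
    rw [← lintegral_const_mul' _ _ ENNReal.ofReal_ne_top]
    refine le_trans (setLIntegral_mono' hS fun x hx => ?_) (lintegral_mono_set hSΩ)
    rw [← key, ← ENNReal.ofReal_mul hc.le]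
    apply ENNReal.ofReal_le_ofReal
    rw [mul_comm]
    have := hγ x hx
    gcongr
  have h2 : ∫⁻ x in S, ‖u x‖ₑ ^ p < ⊤ := by
    by_contra h
    rw [not_lt, top_le_iff] at h
    rw [h, ENNReal.mul_top (by simpa using hc)] at h1
    exact lt_irrefl _ h1
  have h3 : MemLp u (ENNReal.ofReal p) (volume.restrict S) := by
    refine ⟨hu.aestronglyMeasurable, ?_⟩
    rw [eLpNorm_lt_top_iff_lintegral_rpow_enorm_lt_top (by simpa using hp0) ENNReal.ofReal_ne_top,
      ENNReal.toReal_ofReal hp0.le]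
    exact h2
  exact h3.integrable (by rw [← ENNReal.ofReal_one]; exact ENNReal.ofReal_le_ofReal hp.le)

/-! ### The energy estimate -/

/-- The integrand `γ(x)^{-β} ρ(|x-y|/(δη(x))) |v(x)-v(y)|^p (δη(x))^{-(d+p)}` of the nonlocal
energy, as an extended nonnegative real. -/
def nlG {d : ℕ} (Ω : Set (Euc d)) (γ : Euc d → ℝ) (ρ : ℝ → ℝ) (p β δ : ℝ) (v : Euc d → ℝ)
    (x y : Euc d) : ℝ≥0∞ :=
  ENNReal.ofReal (γ x ^ (-β) * ρ (‖x - y‖ / (δ * etaD Ω x)) * |v x - v y| ^ p /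
    (δ * etaD Ω x) ^ ((d : ℝ) + p))

lemma measurable_etaD {d : ℕ} (Ω : Set (Euc d)) : Measurable (etaD Ω) :=
  (continuous_infDist_pt _).measurable

lemma measurable_nlG {d : ℕ} {Ω : Set (Euc d)} {γ : Euc d → ℝ} {ρ : ℝ → ℝ} {p β δ : ℝ}
    {v : Euc d → ℝ} (hγ : Measurable γ) (hρ : Measurable ρ) (hv : Measurable v) :
    Measurable fun q : Euc d × Euc d => nlG Ω γ ρ p β δ v q.1 q.2 := by
  have := measurable_etaD Ω
  unfold nlG
  simp only [← Real.norm_eq_abs]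
  fun_prop

lemma abs_etaD_sub_le {d : ℕ} (Ω : Set (Euc d)) (x y : Euc d) :
    |etaD Ω x - etaD Ω y| ≤ ‖x - y‖ := by
  have := (lipschitz_infDist_pt (frontier Ω)).dist_le_mul x y
  simpa [Real.dist_eq, dist_eq_norm, etaD] using this

/-- The estimate of the theorem for globally measurable `γ` and `λ`, with `κε` replaced by any
`t < 1` that dominates `κ₁ε` and satisfies `ελ ≤ tη` and `κ₁ελ ≤ tγ` on `Ω`. -/
lemma energy_le {d : ℕ} {Ω : Set (Euc d)} {γ lam u : Euc d → ℝ} {ψ ρ : ℝ → ℝ}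
    {L : Euc d → (Euc d →L[ℝ] ℝ)} {p β κ₁ t ε δ r : ℝ} (hp : 1 < p)
    (hΩ : IsOpen Ω) (hγmeas : Measurable γ) (hlammeas : Measurable lam) (hu : Measurable u)
    (hψnn : ∀ x, 0 ≤ ψ x) (hψmeas : Measurable ψ)
    (hψbdd : ∃ M : ℝ, ∀ x, ψ x ≤ M)
    (hψsupp : ∀ x : ℝ, 1 ≤ |x| → ψ x = 0)
    (hψnorm : ∫ x : Euc d, ψ ‖x‖ = 1)
    (hρnn : ∀ x, 0 ≤ ρ x) (hρmeas : Measurable ρ) (hρmono : AntitoneOn ρ (Set.Ici 0))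
    (hε : 0 < ε) (hδ : 0 < δ) (hκ₁ : 0 ≤ κ₁) (hκt : κ₁ * ε ≤ t) (ht1 : t < 1) (hr : 0 < r)
    (hη : ∀ x ∈ Ω, 0 < etaD Ω x) (hlampos : ∀ x ∈ Ω, 0 < lam x)
    (hlamη : ∀ x ∈ Ω, ε * lam x ≤ t * etaD Ω x)
    (hγpos : ∀ x ∈ Ω, 0 < γ x) (hlamγ : ∀ x ∈ Ω, κ₁ * (ε * lam x) ≤ t * γ x)
    (hγlip : ∀ x ∈ Ω, ∀ y ∈ Ω, |γ x - γ y| ≤ κ₁ * ‖x - y‖)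
    (hL : ∀ x ∈ Ω, HasFDerivAt lam (L x) x) (hLn : ∀ x ∈ Ω, ‖L x‖ ≤ κ₁)
    (hlamlip : ∀ x ∈ Ω, ∀ y ∈ Ω, |lam x - lam y| ≤ κ₁ * ‖x - y‖)
    (huLp : (∫⁻ x in Ω, ENNReal.ofReal (|u x| ^ p * γ x ^ (-β))) < ⊤) :
    ∫⁻ x in Ω ∩ {x | etaD Ω x < (1 - t) / (1 + t) * r}, ∫⁻ y in Ω,
        nlG Ω γ ρ p β ((1 - t) / (1 + t) * δ) (Kconv d Ω lam ψ ε u) x y ≤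
      ENNReal.ofReal ((1 + t) ^ ((d : ℝ) + p) /
          (((1 - t) / (1 + t)) ^ ((d : ℝ) + p + |β|) * (1 - κ₁ * ε) ^ 2)) *
        ∫⁻ x in Ω ∩ {x | etaD Ω x < r}, ∫⁻ y in Ω, nlG Ω γ ρ p β δ u x y := by
  have hp0 : 0 < p := by linarith
  have ht0 : 0 ≤ t := le_trans (by positivity) hκt
  have h1t : 0 < 1 - t := by linarith
  have hc : 0 < 1 - κ₁ * ε := by linarith
  have hμ := isProbabilityMeasure_mollM hψnn hψnorm
  have hμ1 := ae_norm_lt_one_mollM (d := d) hψmeas hψsupp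
  set μ := mollM d ψ with hμdef
  have hηmeas := measurable_etaD Ω
  have hball : ∀ x ∈ Ω, ball x (ε * lam x) ⊆ Ω := fun x hx =>
    (ball_subset_ball ((hlamη x hx).trans (by nlinarith [hη x hx]))).trans
      (ball_subset_of_infDist_frontier hΩ hx)
  have hγb : ∀ x ∈ Ω, ∀ y ∈ ball x (ε * lam x), (1 - t) * γ x ≤ γ y ∧ γ y ≤ (1 + t) * γ x := by
    intro x hx y hy
    have h1 := hγlip y (hball x hx hy) x hx
    have h2 : κ₁ * ‖y - x‖ ≤ κ₁ * (ε * lam x) := by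
      rw [mem_ball, dist_eq_norm] at hy
      gcongr
    have h3 := abs_le.1 (h1.trans (h2.trans (hlamγ x hx)))
    constructor <;> linarith [h3.1, h3.2]
  have hηb : ∀ x ∈ Ω, ∀ y ∈ ball x (ε * lam x),
      (1 - t) * etaD Ω x ≤ etaD Ω y ∧ etaD Ω y ≤ (1 + t) * etaD Ω x := by
    intro x hx y hy
    rw [mem_ball, dist_eq_norm] at hy
    have h3 := abs_le.1 ((abs_etaD_sub_le Ω y x).trans (hy.le.trans (hlamη x hx)))
    constructor <;> linarith [h3.1, h3.2]
  have hinteg : ∀ x ∈ Ω, Integrable (fun z => u (x + (ε * lam x) • z)) μ := by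
    intro x hx
    have hs : 0 < ε * lam x := mul_pos hε (hlampos x hx)
    refine integrable_mollM hψnn hψmeas hψbdd hψsupp hs ?_
    refine integrableOn_of_weighted (γ := γ) (β := β) (p := p)
      (c := γ x ^ (-β) * ((1 - t) / (1 + t)) ^ |β|) hp hu
      measurableSet_ball measure_ball_lt_top (hball x hx) ?_ ?_ huLp
    · have := hγpos x hx
      positivity
    · intro y hy
      obtain ⟨h1, h2⟩ := hγb x hx y hy
      exact weight_le (hγpos x hx) ht0 ht1 h1 h2
  have hmem : ∀ z : Euc d, ‖z‖ < 1 → ∀ x ∈ Ω, x + (ε * lam x) • z ∈ ball x (ε * lam x) := by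
    intro z hz x hx
    have hs : 0 < ε * lam x := mul_pos hε (hlampos x hx)
    rw [mem_ball, dist_eq_norm, add_sub_cancel_left, norm_smul, Real.norm_eq_abs, abs_of_pos hs]
    nlinarith
  set C₀ : ℝ := (1 + t) ^ ((d : ℝ) + p) / ((1 - t) / (1 + t)) ^ ((d : ℝ) + p + |β|) with hC₀
  have hC₀0 : 0 ≤ C₀ := by positivity
  set c : ℝ≥0∞ := ENNReal.ofReal ((1 - κ₁ * ε)⁻¹) with hcdef
  set Φ : Euc d → Euc d → Euc d := fun z x => x + (ε * lam x) • z with hΦ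
  -- pointwise bound: Jensen's inequality in `z` and the comparison of kernels, with
  -- `|Φ_z x - Φ_z y| ≤ (1 + κ₁ε)|x - y|` because `λ` is `κ₁`-Lipschitz
  have hpt : ∀ x ∈ Ω, ∀ y ∈ Ω,
      nlG Ω γ ρ p β ((1 - t) / (1 + t) * δ) (Kconv d Ω lam ψ ε u) x y ≤
        ∫⁻ z, ENNReal.ofReal C₀ * nlG Ω γ ρ p β δ u (Φ z x) (Φ z y) ∂μ := by
    intro x hx y hy
    have hJ := abs_integral_sub_rpow_le hp (hinteg x hx) (hinteg y hy)
    rw [← Kconv_eq hψnn hψmeas hψsupp (mul_pos hε (hlampos x hx)) (hball x hx),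
      ← Kconv_eq hψnn hψmeas hψsupp (mul_pos hε (hlampos y hy)) (hball y hy)] at hJ
    set W : ℝ := γ x ^ (-β) * ρ (‖x - y‖ / ((1 - t) / (1 + t) * δ * etaD Ω x)) /
      ((1 - t) / (1 + t) * δ * etaD Ω x) ^ ((d : ℝ) + p) with hW
    have hW0 : 0 ≤ W := by
      have := hγpos x hx
      have := hη x hx
      have := hρnn (‖x - y‖ / ((1 - t) / (1 + t) * δ * etaD Ω x))
      positivity
    calc nlG Ω γ ρ p β ((1 - t) / (1 + t) * δ) (Kconv d Ω lam ψ ε u) x y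
        = ENNReal.ofReal W *
          ENNReal.ofReal (|Kconv d Ω lam ψ ε u x - Kconv d Ω lam ψ ε u y| ^ p) := by
          rw [← ENNReal.ofReal_mul hW0, nlG]
          congr 1
          rw [hW]; ring
      _ ≤ ENNReal.ofReal W *
          ∫⁻ z, ENNReal.ofReal (|u (Φ z x) - u (Φ z y)| ^ p) ∂μ := by gcongr
      _ = ∫⁻ z, ENNReal.ofReal W * ENNReal.ofReal (|u (Φ z x) - u (Φ z y)| ^ p) ∂μ :=
          (lintegral_const_mul' _ _ ENNReal.ofReal_ne_top).symm
      _ ≤ _ := by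
          refine lintegral_mono_ae ?_
          filter_upwards [hμ1] with z hz
          rw [nlG, ← ENNReal.ofReal_mul hW0, ← ENNReal.ofReal_mul hC₀0]
          apply ENNReal.ofReal_le_ofReal
          obtain ⟨hγ1, hγ2⟩ := hγb x hx _ (hmem z hz x hx)
          obtain ⟨hη1, hη2⟩ := hηb x hx _ (hmem z hz x hx)
          have hD : ‖Φ z x - Φ z y‖ ≤ (1 + t) * ‖x - y‖ := by
            have h1 : Φ z x - Φ z y = (x - y) + (ε * (lam x - lam y)) • z := by
              simp only [hΦ]; module
            rw [h1]
            calc _ ≤ ‖x - y‖ + ‖(ε * (lam x - lam y)) • z‖ := norm_add_le _ _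
              _ = ‖x - y‖ + ε * |lam x - lam y| * ‖z‖ := by
                  rw [norm_smul, Real.norm_eq_abs, abs_mul, abs_of_pos hε]
              _ ≤ ‖x - y‖ + ε * (κ₁ * ‖x - y‖) * 1 := by
                  have := hlamlip x hx y hy
                  gcongr
              _ ≤ _ := by nlinarith [norm_nonneg (x - y)]
          have hk := kernel_le (β := β) (q := (d : ℝ) + p) hρnn hρmono (by positivity) hδ ht0 ht1
            (hγpos x hx) (hη x hx) hγ1 hγ2 hη1 hη2 (norm_nonneg _) hD
          calc _ ≤ _ := mul_le_mul_of_nonneg_right hk (by positivity)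
            _ = _ := by ring
  have hΩm : MeasurableSet Ω := hΩ.measurableSet
  have hAm : ∀ s : ℝ, MeasurableSet (Ω ∩ {x | etaD Ω x < s}) := fun s =>
    hΩm.inter (measurableSet_lt hηmeas measurable_const)
  have hGm := measurable_nlG (Ω := Ω) (p := p) (β := β) (δ := δ) hγmeas hρmeas hu
  have hHm : Measurable fun q : (Euc d × Euc d) × Euc d =>
      ENNReal.ofReal C₀ * nlG Ω γ ρ p β δ u (Φ q.2 q.1.1) (Φ q.2 q.1.2) := by
    have : Measurable fun q : (Euc d × Euc d) × Euc d => (Φ q.2 q.1.1, Φ q.2 q.1.2) := by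
      simp only [hΦ]; fun_prop
    exact (hGm.comp this).const_mul _
  -- for fixed `z`, change variables first in `y` and then in `x`; the set `{η < θr}` is mapped
  -- into `{η < (1 - t)r} ⊆ {η < r}`
  have hz : ∀ z : Euc d, ‖z‖ < 1 →
      ∫⁻ x in Ω ∩ {x | etaD Ω x < (1 - t) / (1 + t) * r}, ∫⁻ y in Ω,
        nlG Ω γ ρ p β δ u (Φ z x) (Φ z y) ≤
      c * (c * ∫⁻ x in Ω ∩ {x | etaD Ω x < r}, ∫⁻ y in Ω, nlG Ω γ ρ p β δ u x y) := by
    intro z hz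
    have hmaps : MapsTo (Φ z) Ω Ω := fun x hx => hball x hx (hmem z hz x hx)
    calc _ ≤ ∫⁻ x in Ω ∩ {x | etaD Ω x < (1 - t) / (1 + t) * r},
          (c * ∫⁻ y in Ω, nlG Ω γ ρ p β δ u (Φ z x) y) :=
          lintegral_mono fun x => lintegral_comp_le hε.le (by linarith) hz.le hL hLn hlamlip hΩm
            subset_rfl hmaps (fun y => nlG Ω γ ρ p β δ u (Φ z x) y)
      _ ≤ c * ∫⁻ x in Ω ∩ {x | etaD Ω x < r}, (c * ∫⁻ y in Ω, nlG Ω γ ρ p β δ u x y) := by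
          refine lintegral_comp_le hε.le (by linarith) hz.le hL hLn hlamlip (hAm _)
            inter_subset_left ?_ (fun x => c * ∫⁻ y in Ω, nlG Ω γ ρ p β δ u x y)
          rintro x ⟨hx, hxr⟩
          refine ⟨hmaps hx, ?_⟩
          have h2 := (hηb x hx _ (hmem z hz x hx)).2
          simp only [mem_ofPred_eq] at hxr ⊢
          calc _ ≤ (1 + t) * etaD Ω x := h2
            _ < (1 + t) * ((1 - t) / (1 + t) * r) := by gcongr
            _ = (1 - t) * r := by field_simp
            _ ≤ r := by nlinarith
      _ = _ := by rw [lintegral_const_mul' _ _ ENNReal.ofReal_ne_top]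
  calc _ ≤ ∫⁻ x in Ω ∩ {x | etaD Ω x < (1 - t) / (1 + t) * r}, ∫⁻ y in Ω,
        ∫⁻ z, ENNReal.ofReal C₀ * nlG Ω γ ρ p β δ u (Φ z x) (Φ z y) ∂μ :=
        setLIntegral_mono' (hAm _) fun x hx => setLIntegral_mono' hΩm fun y hy => hpt x hx.1 y hy
    _ = ∫⁻ x in Ω ∩ {x | etaD Ω x < (1 - t) / (1 + t) * r}, ∫⁻ z, (∫⁻ y in Ω,
        ENNReal.ofReal C₀ * nlG Ω γ ρ p β δ u (Φ z x) (Φ z y)) ∂μ := by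
        refine lintegral_congr fun x => lintegral_lintegral_swap ?_
        exact (hHm.comp (f := fun q : Euc d × Euc d => ((x, q.1), q.2))
          (by fun_prop)).aemeasurable
    _ = ∫⁻ z, (∫⁻ x in Ω ∩ {x | etaD Ω x < (1 - t) / (1 + t) * r}, ∫⁻ y in Ω,
        ENNReal.ofReal C₀ * nlG Ω γ ρ p β δ u (Φ z x) (Φ z y)) ∂μ := by
        refine lintegral_lintegral_swap (Measurable.aemeasurable ?_)
        exact (hHm.comp (f := fun q : (Euc d × Euc d) × Euc d => ((q.1.1, q.2), q.1.2))
          (by fun_prop)).lintegral_prod_right'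
    _ ≤ ∫⁻ z, ENNReal.ofReal C₀ *
        (c * (c * ∫⁻ x in Ω ∩ {x | etaD Ω x < r}, ∫⁻ y in Ω, nlG Ω γ ρ p β δ u x y)) ∂μ := by
        refine lintegral_mono_ae ?_
        filter_upwards [hμ1] with z hz1
        simp only [lintegral_const_mul' _ _ ENNReal.ofReal_ne_top]
        have := hz z hz1
        gcongr
    _ = _ := by
        rw [lintegral_const, measure_univ, mul_one, ← mul_assoc, ← mul_assoc, hcdef,
          ← ENNReal.ofReal_mul hC₀0, ← ENNReal.ofReal_mul (by positivity)]
        congr 2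
        rw [hC₀]
        field_simp

/-- **Seminorm bound for boundary-localized convolutions up to the boundary.** With
`κ := κ₀²κ₁`, `θ(ε) := (1-κε)/(1+κε)` and
`φ(ε) := (1+κε)^{d+p}/(θ(ε)^{d+p+|β|}(1-κ₁ε)²)`, for all `ε, δ ∈ (0,1/(3κ))`, all `r > 0`
and every measurable `u` with `∫_Ω |u|^p γ^{-β} < ∞`:
`∫_{Ω∩{η<θ(ε)r}} ∫_Ω γ(x)^{-β} ρ(|x-y|/(θ(ε)δη(x))) |K_ε u(x)-K_ε u(y)|^p (θ(ε)δη(x))^{-(d+p)}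
  ≤ φ(ε) ∫_{Ω∩{η<r}} ∫_Ω γ(x)^{-β} ρ(|x-y|/(δη(x))) |u(x)-u(y)|^p (δη(x))^{-(d+p)}`. -/
theorem stmt10 (d : ℕ) (hd : 1 ≤ d) (p β κ₀ κ₁ κ : ℝ) (hp : 1 < p)
    (hκ₀ : 1 ≤ κ₀) (hκ₁ : 1 ≤ κ₁) (hκ : κ = κ₀ ^ 2 * κ₁)
    (Ωstar Γ : Set (Euc d)) (hΩopen : IsOpen Ωstar) (hΩbdd : Bornology.IsBounded Ωstar)
    (hΓfin : Γ.Finite) (hΓne : Γ.Nonempty) (hΓsub : Γ ⊆ closure Ωstar)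
    (γ : Euc d → ℝ) (hγpos : ∀ x ∈ Ωstar \ Γ, 0 < γ x)
    (hγlip : LipschitzOnWith (Real.toNNReal κ₁) γ (Ωstar \ Γ))
    (hγdist : ∀ x ∈ Ωstar \ Γ, Metric.infDist x Γ ≤ κ₀ * γ x)
    (lam : Euc d → ℝ)
    (hlam : ∀ x ∈ Ωstar \ Γ, 0 < lam x ∧
      κ₀⁻¹ * etaD (Ωstar \ Γ) x ≤ lam x ∧ lam x ≤ κ₀ * etaD (Ωstar \ Γ) x)
    (hlamlip : ∀ x ∈ Ωstar \ Γ, ∀ y ∈ Ωstar \ Γ, |lam x - lam y| ≤ κ₁ * ‖x - y‖)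
    (hlamC1 : ContDiffOn ℝ 1 lam (Ωstar \ Γ))
    (hlamgrad : ∀ x ∈ Ωstar \ Γ, ‖fderivWithin ℝ lam (Ωstar \ Γ) x‖ ≤ κ₁)
    (ψ : ℝ → ℝ) (hψnn : ∀ x, 0 ≤ ψ x) (hψmeas : Measurable ψ)
    (hψbdd : ∃ M : ℝ, ∀ x, ψ x ≤ M) (hψeven : ∀ x, ψ (-x) = ψ x)
    (hψmono : AntitoneOn ψ (Set.Ici 0)) (hψsupp : ∀ x : ℝ, 1 ≤ |x| → ψ x = 0)
    (b cψ : ℝ) (hb : 0 < b) (hcψ : cψ ∈ Set.Ioo (0 : ℝ) 1)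
    (hψlb : ∀ x ∈ Set.Icc (0 : ℝ) cψ, b ≤ ψ x)
    (hψnorm : ∫ x : Euc d, ψ ‖x‖ = 1)
    (ρ : ℝ → ℝ) (hρnn : ∀ x, 0 ≤ ρ x) (hρmeas : Measurable ρ)
    (hρbdd : ∃ M : ℝ, ∀ x, ρ x ≤ M) (hρeven : ∀ x, ρ (-x) = ρ x)
    (hρmono : AntitoneOn ρ (Set.Ici 0)) (hρsupp : ∀ x : ℝ, 1 ≤ |x| → ρ x = 0)
    (b' cρ : ℝ) (hb' : 0 < b') (hcρ : cρ ∈ Set.Ioo (0 : ℝ) 1)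
    (hρlb : ∀ x ∈ Set.Icc (0 : ℝ) cρ, b' ≤ ρ x)
    (ε δ r : ℝ) (hε : ε ∈ Set.Ioo (0 : ℝ) (1 / (3 * κ)))
    (hδ : δ ∈ Set.Ioo (0 : ℝ) (1 / (3 * κ))) (hr : 0 < r)
    (θ φ : ℝ) (hθ : θ = (1 - κ * ε) / (1 + κ * ε))
    (hφ : φ = (1 + κ * ε) ^ ((d : ℝ) + p) / (θ ^ ((d : ℝ) + p + |β|) * (1 - κ₁ * ε) ^ 2))
    (u : Euc d → ℝ) (hu : Measurable u)
    (huLp : (∫⁻ x in Ωstar \ Γ, ENNReal.ofReal (|u x| ^ p * γ x ^ (-β))) < ⊤) :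
    ∫⁻ x in (Ωstar \ Γ) ∩ {x | etaD (Ωstar \ Γ) x < θ * r}, ∫⁻ y in Ωstar \ Γ,
        ENNReal.ofReal (γ x ^ (-β) * ρ (‖x - y‖ / (θ * δ * etaD (Ωstar \ Γ) x)) *
          |Kconv d (Ωstar \ Γ) lam ψ ε u x - Kconv d (Ωstar \ Γ) lam ψ ε u y| ^ p /
            (θ * δ * etaD (Ωstar \ Γ) x) ^ ((d : ℝ) + p)) ≤
      ENNReal.ofReal φ *
        ∫⁻ x in (Ωstar \ Γ) ∩ {x | etaD (Ωstar \ Γ) x < r}, ∫⁻ y in Ωstar \ Γ,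
          ENNReal.ofReal (γ x ^ (-β) * ρ (‖x - y‖ / (δ * etaD (Ωstar \ Γ) x)) *
            |u x - u y| ^ p / (δ * etaD (Ωstar \ Γ) x) ^ ((d : ℝ) + p)) := by
  set Ω := Ωstar \ Γ with hΩdef
  have hΩ : IsOpen Ω := hΩopen.sdiff hΓfin.isClosed
  have hκ₀0 : 0 < κ₀ := by linarith
  have hκ₁0 : 0 < κ₁ := by linarith
  have hκ0 : 0 < κ := by rw [hκ]; positivity
  have hε0 := hε.1
  have ht1 : κ * ε < 1 := by
    have h1 := hε.2
    rw [lt_div_iff₀ (by positivity)] at h1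
    linarith
  have hκ₀κ : κ₀ ≤ κ := by
    rw [hκ]
    calc κ₀ = κ₀ * 1 * 1 := by ring
      _ ≤ κ₀ * κ₀ * κ₁ := by gcongr
      _ = _ := by ring
  have hκ₁κ : κ₁ ≤ κ := by
    rw [hκ]
    nlinarith [one_le_pow₀ hκ₀ (n := 2)]
  have hη : ∀ x ∈ Ω, 0 < etaD Ω x := fun x hx =>
    pos_of_mul_pos_right ((hlam x hx).1.trans_le (hlam x hx).2.2) hκ₀0.le
  have hηγ : ∀ x ∈ Ω, etaD Ω x ≤ κ₀ * γ x := fun x hx =>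
    (infDist_le_infDist_of_subset (finite_subset_frontier hd hΩopen hΓfin hΓsub) hΓne).trans
      (hγdist x hx)
  have hlamlip' : LipschitzOnWith (Real.toNNReal κ₁) lam Ω := by
    refine LipschitzOnWith.of_dist_le_mul fun x hx y hy => ?_
    rw [Real.dist_eq, dist_eq_norm, Real.coe_toNNReal _ hκ₁0.le]
    exact hlamlip x hx y hy
  -- Lipschitz extensions make the weight and the localization globally measurable
  obtain ⟨g, hglip, hg⟩ := hγlip.extend_real
  obtain ⟨l, hllip, hl⟩ := hlamlip'.extend_real
  have hK : ∀ x ∈ Ω, Kconv d Ω lam ψ ε u x = Kconv d Ω l ψ ε u x := fun x hx => by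
    unfold Kconv; rw [hl hx]
  have hΩm : MeasurableSet Ω := hΩ.measurableSet
  have hAm : ∀ s : ℝ, MeasurableSet (Ω ∩ {x | etaD Ω x < s}) := fun s =>
    hΩm.inter (measurableSet_lt (measurable_etaD Ω) measurable_const)
  have hmain := energy_le (d := d) (Ω := Ω) (γ := g) (lam := l) (u := u) (ψ := ψ) (ρ := ρ)
    (L := fun x => fderivWithin ℝ lam Ω x) (p := p) (β := β) (κ₁ := κ₁) (t := κ * ε) (ε := ε)
    (δ := δ) (r := r) hp hΩ hglip.continuous.measurable hllip.continuous.measurable hu hψnn hψmeas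
    hψbdd hψsupp hψnorm hρnn hρmeas hρmono hε0 hδ.1 hκ₁0.le (by gcongr) ht1 hr hη
    (fun x hx => by rw [← hl hx]; exact (hlam x hx).1)
    (fun x hx => by
      rw [← hl hx]
      have h1 := (hlam x hx).2.2
      have h2 := hη x hx
      calc ε * lam x ≤ ε * (κ₀ * etaD Ω x) := by gcongr
        _ ≤ ε * (κ * etaD Ω x) := by gcongr
        _ = _ := by ring)
    (fun x hx => by rw [← hg hx]; exact hγpos x hx)
    (fun x hx => by
      rw [← hl hx, ← hg hx, hκ]
      have h1 := (hlam x hx).2.2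
      have h2 := hηγ x hx
      calc κ₁ * (ε * lam x) ≤ κ₁ * (ε * (κ₀ * (κ₀ * γ x))) := by
            gcongr
            exact h1.trans (by gcongr)
        _ = _ := by ring)
    (fun x hx y hy => by
      have := hglip.dist_le_mul x y
      rwa [Real.dist_eq, dist_eq_norm, Real.coe_toNNReal _ hκ₁0.le] at this)
    (fun x hx => by
      have h1 := ((hlamC1.differentiableOn one_ne_zero) x hx).hasFDerivWithinAt.hasFDerivAt
        (hΩ.mem_nhds hx)
      exact h1.congr_of_eventuallyEq
        (Filter.eventuallyEq_of_mem (hΩ.mem_nhds hx) fun y hy => (hl hy).symm))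
    hlamgrad
    (fun x hx y hy => by
      have := hllip.dist_le_mul x y
      rwa [Real.dist_eq, dist_eq_norm, Real.coe_toNNReal _ hκ₁0.le] at this)
    (by
      rw [setLIntegral_congr_fun hΩm (g := fun x => ENNReal.ofReal (|u x| ^ p * γ x ^ (-β)))
        (fun x hx => by simp only [hg hx])]
      exact huLp)
  rw [← hθ, ← hφ] at hmain
  convert hmain using 1
  · refine setLIntegral_congr_fun (hAm _) fun x hx => setLIntegral_congr_fun hΩm fun y hy => ?_
    simp only [nlG, hg hx.1, hK x hx.1, hK y hy]
  · congr 1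
    refine setLIntegral_congr_fun (hAm _) fun x hx => setLIntegral_congr_fun hΩm fun y hy => ?_
    simp only [nlG, hg hx.1]

end
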